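/- Call a pair (γ,δ) ∈ [N]×[T] admissible if (α,β,γ,δ) ∈ 𝔛 for some α ∈ [N], β ∈ [M]. Let γ₀ > 0 and let μ̄ be a probability distribution on 𝔛. Suppose matrices W_χ ∈ ℝ^{ℓ×ℓ} (symmetric), R_χ ∈ ℝ^{n×n} (symmetric), G_{γ,δ} ∈ ℝ^{n×n}, and F_{γ,δ} ∈ ℝ^{m×n} satisfy, for every χ = (α,β,γ,δ) ∈ 𝔛: the symmetric block matrix [[R_χ − μ̄(χ) E_α E_αᵀ, A_α G_{γ,δ} + B_α F_{γ,δ}],[(A_α G_{γ,δ} + B_α F_{γ,δ})ᵀ, G_{γ,δ} + G_{γ,δ}ᵀ − D̄_χ(R)]] is positive definite; the symmetric block matrix [[W_χ, C_α G_{γ,δ} + D_α F_{γ,δ}],[(C_α G_{γ,δ} + D_α F_{γ,δ})ᵀ, G_{γ,δ} + G_{γ,δ}ᵀ − D̄_χ(R)]] is positive definite; and Σ_{χ∈𝔛} tr(W_χ) < γ₀. Then G_{γ,δ} is invertible for every admissible (γ,δ), and if the feedback gains satisfy K_{γ,δ} = F_{γ,δ} G_{γ,δ}⁻¹ for every admissible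 (γ,δ), then there exist symmetric positive definite matrices Q_χ ∈ ℝ^{n×n} (χ ∈ 𝔛) such that Σ_{χ∈𝔛} tr(C_{K,χ} Q_χ C_{K,χ}ᵀ) < γ₀ and Q_χ − D̄_χ(A_K Q A_Kᵀ + μ̄ E_K E_Kᵀ) is positive definite for every χ ∈ 𝔛, where (A_K Q A_Kᵀ)_χ = A_{K,χ} Q_χ A_{K,χ}ᵀ and (μ̄ E_K E_Kᵀ)_χ = μ̄(χ) E_{K,χ} E_{K,χ}ᵀ. -/

import Mathlib

open MeasureTheory ProbabilityTheory Matrix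

noncomputable section

/-- The state space `[N] × [M] × [N] × [T]` of the extended process `r̄`.
`Fin N`, `Fin M`, `Fin T` play the roles of `[N] = {1,…,N}`, `[M]`, `[T]`
(with `Fin T` being the 0-indexed version of `[T] = {1,…,T}`, i.e. `δ ∈ [T]`
corresponds to `δ - 1 : Fin T`). -/
abbrev XT (NN MM T : ℕ) : Type := Fin NN × Fin MM × Fin NN × Fin T

/-- `X` is a time-homogeneous Markov chain with transition probability matrix `P`:
for every `k`, every state `j` and every sequence of states `i`,
`Pr(X(k+1) = j ∧ X(l) = i l for all l ≤ k) = P (i k) j * Pr(X(l) = i l for all l ≤ k)`. -/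
def IsMarkovChain {Ω : Type} {_mΩ : MeasurableSpace Ω} (μ : Measure Ω) {S : Type}
    (X : ℕ → Ω → S) (P : S → S → ℝ) : Prop :=
  ∀ (k : ℕ) (j : S) (i : ℕ → S),
    (μ {ω | X (k + 1) ω = j ∧ ∀ l ≤ k, X l ω = i l}).toReal
      = P (i k) j * (μ {ω | ∀ l ≤ k, X l ω = i l}).toReal

/-- `⌊m⌋_T`, the unique element of `{0,…,T-1}` congruent to `m` modulo `T`, as `Fin T`. -/
def intToFin (T : ℕ) [NeZero T] (a : ℤ) : Fin T :=
  ⟨(a % (T : ℤ)).toNat, by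
    have hT : 0 < (T : ℤ) := by
      exact_mod_cast Nat.pos_of_ne_zero (NeZero.ne T)
    have h1 : 0 ≤ a % (T : ℤ) := Int.emod_nonneg a (by omega)
    have h2 : a % (T : ℤ) < (T : ℤ) := Int.emod_lt_of_pos a hT
    omega⟩

-- `τ(k)`: the most recent observation time `≤ k` (i.e. the largest `j ≤ k` with
-- `f(s(j)) = 1`), or `τ₀` if no observation has occurred up to time `k` (`k < t₀`).
open Classical in
def tauZ {Ω : Type} {MM : ℕ} (s : ℕ → Ω → Fin MM) (f : Fin MM → Bool)
    (τ₀ : ℤ) (k : ℕ) (ω : Ω) : ℤ :=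
  if ∃ j ≤ k, f (s j ω) = true
  then ((Nat.findGreatest (fun j => f (s j ω) = true) k : ℕ) : ℤ)
  else τ₀

-- `σ(k) = r(τ(k))` if an observation occurred by time `k` (i.e. `k ≥ t₀`), else `σ₀`.
open Classical in
def sigmaProc {Ω : Type} {NN MM : ℕ} (r : ℕ → Ω → Fin NN) (s : ℕ → Ω → Fin MM)
    (f : Fin MM → Bool) (σ₀ : Fin NN) (k : ℕ) (ω : Ω) : Fin NN :=
  if ∃ j ≤ k, f (s j ω) = true
  then r (Nat.findGreatest (fun j => f (s j ω) = true) k) ω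
  else σ₀

/-- `ρ(k) = ⌊k - τ(k)⌋_T + 1 ∈ [T]`, represented 0-indexed as `⌊k - τ(k)⌋_T : Fin T`. -/
def rhoProc {Ω : Type} {MM T : ℕ} [NeZero T] (s : ℕ → Ω → Fin MM) (f : Fin MM → Bool)
    (τ₀ : ℤ) (k : ℕ) (ω : Ω) : Fin T :=
  intToFin T ((k : ℤ) - tauZ s f τ₀ k ω)

/-- The extended process `r̄(k) = (r(k), s(k), σ(k), ρ(k))`. -/
def rbarProc {Ω : Type} {NN MM T : ℕ} [NeZero T] (r : ℕ → Ω → Fin NN)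
    (s : ℕ → Ω → Fin MM) (f : Fin MM → Bool) (τ₀ : ℤ) (σ₀ : Fin NN)
    (k : ℕ) (ω : Ω) : XT NN MM T :=
  (r k ω, s k ω, sigmaProc r s f σ₀ k ω, rhoProc s f τ₀ k ω)

/-- Membership in `𝔛`: if `f(β) = 1` then `α = γ` and `δ = 1` (0-indexed: `δ = 0`). -/
def inX {NN MM T : ℕ} [NeZero T] (f : Fin MM → Bool) (χ : XT NN MM T) : Prop :=
  f χ.2.1 = true → χ.1 = χ.2.2.1 ∧ χ.2.2.2 = 0

/-- The transition probabilities `p̄_{χχ'}` of the extended chain. The condition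
`⌊δ' - δ - 1⌋_T = 0` for `δ, δ' ∈ [T]` is, in 0-indexed form, `δ' = δ + 1` in `Fin T`. -/
def pbar {NN MM T : ℕ} [NeZero T] (P : Matrix (Fin NN) (Fin NN) ℝ)
    (Q : Matrix (Fin MM) (Fin MM) ℝ) (f : Fin MM → Bool) (χ χ' : XT NN MM T) : ℝ :=
  (if f χ'.2.1 = true
    then (if χ'.1 = χ'.2.2.1 ∧ χ'.2.2.2 = 0 then (1 : ℝ) else 0)
    else (if χ'.2.2.1 = χ.2.2.1 ∧ χ'.2.2.2 = χ.2.2.2 + 1 then (1 : ℝ) else 0))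
  * P χ.1 χ'.1 * Q χ.2.1 χ'.2.1

/-- The state trajectory of the closed-loop system
`x(k+1) = A(mode(k)) x(k) + E(mode(k)) w(k)`, `x(0) = x₀`. -/
def traj {Ω S : Type} {n q : ℕ}
    (Amat : S → Matrix (Fin n) (Fin n) ℝ) (Emat : S → Matrix (Fin n) (Fin q) ℝ)
    (mode : ℕ → Ω → S) (w : ℕ → Ω → Fin q → ℝ) (x0 : Fin n → ℝ) : ℕ → Ω → Fin n → ℝ
  | 0, _ => x0
  | (k + 1), ω =>
      (Amat (mode k ω)).mulVec (traj Amat Emat mode w x0 k ω)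
        + (Emat (mode k ω)).mulVec (w k ω)

/-- `A_{K,χ} = A_α + B_α K_{γ,δ}`. -/
def AKmat {NN MM T n m : ℕ} (A : Fin NN → Matrix (Fin n) (Fin n) ℝ)
    (B : Fin NN → Matrix (Fin n) (Fin m) ℝ)
    (K : Fin NN → Fin T → Matrix (Fin m) (Fin n) ℝ) (χ : XT NN MM T) :
    Matrix (Fin n) (Fin n) ℝ :=
  A χ.1 + B χ.1 * K χ.2.2.1 χ.2.2.2

/-- `C_{K,χ} = C_α + D_α K_{γ,δ}`. -/
def CKmat {NN MM T n m ℓ : ℕ} (C : Fin NN → Matrix (Fin ℓ) (Fin n) ℝ)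
    (D : Fin NN → Matrix (Fin ℓ) (Fin m) ℝ)
    (K : Fin NN → Fin T → Matrix (Fin m) (Fin n) ℝ) (χ : XT NN MM T) :
    Matrix (Fin ℓ) (Fin n) ℝ :=
  C χ.1 + D χ.1 * K χ.2.2.1 χ.2.2.2

/-- Squared Euclidean norm of a vector, as an extended nonnegative real. -/
def sqE {d : ℕ} (v : Fin d → ℝ) : ENNReal := ENNReal.ofReal (∑ i, (v i) ^ 2)

-- The operator `D̄_χ(R) = ∑_{χ' ∈ 𝔛} p̄_{χ'χ} R_{χ'}`.
open Classical in
def Dop {NN MM T n : ℕ} [NeZero T] (P : Matrix (Fin NN) (Fin NN) ℝ)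
    (Q : Matrix (Fin MM) (Fin MM) ℝ) (f : Fin MM → Bool)
    (R : XT NN MM T → Matrix (Fin n) (Fin n) ℝ) (χ : XT NN MM T) :
    Matrix (Fin n) (Fin n) ℝ :=
  ∑ χ' : XT NN MM T, if inX f χ' then pbar P Q f χ' χ • R χ' else 0

-- The operator `F̄_χ(Z) = ∑_{χ' ∈ 𝔛} p̄_{χχ'} Z_{χ,χ'}`.
open Classical in
def Fop {NN MM T n : ℕ} [NeZero T] (P : Matrix (Fin NN) (Fin NN) ℝ)
    (Q : Matrix (Fin MM) (Fin MM) ℝ) (f : Fin MM → Bool)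
    (Z : XT NN MM T → XT NN MM T → Matrix (Fin n) (Fin n) ℝ) (χ : XT NN MM T) :
    Matrix (Fin n) (Fin n) ℝ :=
  ∑ χ' : XT NN MM T, if inX f χ' then pbar P Q f χ χ' • Z χ χ' else 0

/-- A pair `(γ,δ) ∈ [N] × [T]` is admissible if `(α,β,γ,δ) ∈ 𝔛` for some `α, β`. -/
def Admissible {NN MM T : ℕ} [NeZero T] (f : Fin MM → Bool) (g : Fin NN) (d : Fin T) : Prop :=
  ∃ (α : Fin NN) (β : Fin MM), inX (T := T) f (α, β, g, d)

/-- A realization, on some probability space, of the pair of independent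
time-homogeneous Markov chains `(r, s)` with transition matrices `P` and `Q`. -/
structure MJLSReal (NN MM : ℕ) (P : Matrix (Fin NN) (Fin NN) ℝ)
    (Q : Matrix (Fin MM) (Fin MM) ℝ) : Type 1 where
  Ω : Type
  inst : MeasurableSpace Ω
  μ : @Measure Ω inst
  prob : IsProbabilityMeasure μ
  r : ℕ → Ω → Fin NN
  s : ℕ → Ω → Fin MM
  meas_r : ∀ k, Measurable[inst] (r k)
  meas_s : ∀ k, Measurable[inst] (s k)
  markov_r : IsMarkovChain μ r fun i j => P i j
  markov_s : IsMarkovChain μ s fun i j => Q i j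
  indep : IndepFun (fun ω l => r l ω) (fun ω l => s l ω) μ

/-- A realization, on some probability space, of a time-homogeneous Markov chain `θ`
taking values in `𝔛` with transition probabilities `p̄`. -/
structure ThetaReal (NN MM T : ℕ) [NeZero T] (P : Matrix (Fin NN) (Fin NN) ℝ)
    (Q : Matrix (Fin MM) (Fin MM) ℝ) (f : Fin MM → Bool) : Type 1 where
  Ω : Type
  inst : MeasurableSpace Ω
  μ : @Measure Ω inst
  prob : IsProbabilityMeasure μ
  θ : ℕ → Ω → XT NN MM T
  meas : ∀ k, Measurable[inst] (θ k)
  mem : ∀ k ω, inX f (θ k ω)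
  markov : IsMarkovChain μ θ (pbar P Q f)

/-- Mean square stability of the closed-loop system `Σ_K`: there are `c > 0` and
`λ ∈ [0,1)` such that for every realization, every deterministic initialization
(`r(0) = r₀`, `s(0) = s₀` a.s., together with `σ₀` and `τ₀ ≤ 0`, so that `r̄(0)`
is a deterministic element of `𝔛`), every `x₀` and every `k`,
`E[‖x(k)‖²] ≤ c λ^k ‖x₀‖²` (with `w ≡ 0`). -/
def MeanSquareStable {NN MM T n m q : ℕ} [NeZero T]
    (P : Matrix (Fin NN) (Fin NN) ℝ) (Qm : Matrix (Fin MM) (Fin MM) ℝ) (f : Fin MM → Bool)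
    (A : Fin NN → Matrix (Fin n) (Fin n) ℝ) (B : Fin NN → Matrix (Fin n) (Fin m) ℝ)
    (E : Fin NN → Matrix (Fin n) (Fin q) ℝ)
    (K : Fin NN → Fin T → Matrix (Fin m) (Fin n) ℝ) : Prop :=
  ∃ c : ℝ, 0 < c ∧ ∃ lam : ℝ, 0 ≤ lam ∧ lam < 1 ∧
    ∀ (S : MJLSReal NN MM P Qm) (τ₀ : ℤ), τ₀ ≤ 0 →
      ∀ (σ₀ r₀ : Fin NN) (s₀ : Fin MM),
        (∀ᵐ ω ∂S.μ, S.r 0 ω = r₀ ∧ S.s 0 ω = s₀) →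
        ∀ (x0 : Fin n → ℝ) (k : ℕ),
          (∫⁻ ω, sqE (traj (AKmat A B K) (fun χ => E χ.1)
              (rbarProc S.r S.s f τ₀ σ₀) (fun _ _ => 0) x0 k ω) ∂S.μ)
            ≤ ENNReal.ofReal (c * lam ^ k * ∑ i, (x0 i) ^ 2)

/-- Mean square stability of `Σ̄_K` (the system driven by the chain `θ`). -/
def MeanSquareStableBar {NN MM T n m q : ℕ} [NeZero T]
    (P : Matrix (Fin NN) (Fin NN) ℝ) (Qm : Matrix (Fin MM) (Fin MM) ℝ) (f : Fin MM → Bool)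
    (A : Fin NN → Matrix (Fin n) (Fin n) ℝ) (B : Fin NN → Matrix (Fin n) (Fin m) ℝ)
    (E : Fin NN → Matrix (Fin n) (Fin q) ℝ)
    (K : Fin NN → Fin T → Matrix (Fin m) (Fin n) ℝ) : Prop :=
  ∃ c : ℝ, 0 < c ∧ ∃ lam : ℝ, 0 ≤ lam ∧ lam < 1 ∧
    ∀ (S : ThetaReal NN MM T P Qm f) (χ : XT NN MM T), inX f χ →
      (∀ᵐ ω ∂S.μ, S.θ 0 ω = χ) →
      ∀ (x0 : Fin n → ℝ) (k : ℕ),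
        (∫⁻ ω, sqE (traj (AKmat A B K) (fun χ' => E χ'.1) S.θ (fun _ _ => 0) x0 k ω) ∂S.μ)
          ≤ ENNReal.ofReal (c * lam ^ k * ∑ i, (x0 i) ^ 2)

/-- The impulse disturbance `w = e_i φ`, i.e. `w(0) = e_i` and `w(k) = 0` for `k ≥ 1`. -/
def impulse {Ω : Type} (q : ℕ) (i : Fin q) : ℕ → Ω → Fin q → ℝ :=
  fun k _ j => if k = 0 ∧ j = i then 1 else 0

/-- `∑_k E[‖z(k; 0, χ, e_i φ)‖²]` for `Σ_K` on a given realization with data `(τ₀, σ₀)`. -/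
def H2TermSigma {NN MM T n m q ℓ : ℕ} [NeZero T]
    {P : Matrix (Fin NN) (Fin NN) ℝ} {Qm : Matrix (Fin MM) (Fin MM) ℝ}
    (S : MJLSReal NN MM P Qm) (f : Fin MM → Bool) (τ₀ : ℤ) (σ₀ : Fin NN)
    (A : Fin NN → Matrix (Fin n) (Fin n) ℝ) (B : Fin NN → Matrix (Fin n) (Fin m) ℝ)
    (C : Fin NN → Matrix (Fin ℓ) (Fin n) ℝ) (D : Fin NN → Matrix (Fin ℓ) (Fin m) ℝ)
    (E : Fin NN → Matrix (Fin n) (Fin q) ℝ)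
    (K : Fin NN → Fin T → Matrix (Fin m) (Fin n) ℝ) (i : Fin q) : ENNReal :=
  ∑' k : ℕ, ∫⁻ ω, sqE ((CKmat C D K (rbarProc S.r S.s f τ₀ σ₀ k ω)).mulVec
      (traj (AKmat A B K) (fun χ => E χ.1) (rbarProc S.r S.s f τ₀ σ₀)
        (impulse q i) 0 k ω)) ∂S.μ

-- `‖Σ_K‖₂² < γ`, where `‖Σ_K‖₂² = ∑_{i=1}^q ∑_{χ ∈ 𝔛} μ̄(χ) ‖z(⬝;0,χ,e_iφ)‖₂²` and the
-- expectations are over arbitrary realizations with deterministic initialization `r̄(0) = χ`.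
open Classical in
def H2SqLtSigma {NN MM T n m q ℓ : ℕ} [NeZero T]
    (P : Matrix (Fin NN) (Fin NN) ℝ) (Qm : Matrix (Fin MM) (Fin MM) ℝ) (f : Fin MM → Bool)
    (A : Fin NN → Matrix (Fin n) (Fin n) ℝ) (B : Fin NN → Matrix (Fin n) (Fin m) ℝ)
    (C : Fin NN → Matrix (Fin ℓ) (Fin n) ℝ) (D : Fin NN → Matrix (Fin ℓ) (Fin m) ℝ)
    (E : Fin NN → Matrix (Fin n) (Fin q) ℝ)
    (K : Fin NN → Fin T → Matrix (Fin m) (Fin n) ℝ)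
    (μbar : XT NN MM T → ℝ) (γ : ℝ) : Prop :=
  ∀ (S : Fin q → XT NN MM T → MJLSReal NN MM P Qm)
    (τ : Fin q → XT NN MM T → ℤ) (σv : Fin q → XT NN MM T → Fin NN),
    (∀ i χ, inX f χ → τ i χ ≤ 0 ∧
        (∀ᵐ ω ∂(S i χ).μ, rbarProc (S i χ).r (S i χ).s f (τ i χ) (σv i χ) 0 ω = χ)) →
    (∑ i : Fin q, ∑ χ : XT NN MM T,
        if inX f χ
        then ENNReal.ofReal (μbar χ) * H2TermSigma (S i χ) f (τ i χ) (σv i χ) A B C D E K i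
        else 0)
      < ENNReal.ofReal γ

/-- `∑_k E[‖z̄(k; 0, χ, e_i φ)‖²]` for `Σ̄_K` on a given realization of `θ`. -/
def H2TermBar {NN MM T n m q ℓ : ℕ} [NeZero T]
    {P : Matrix (Fin NN) (Fin NN) ℝ} {Qm : Matrix (Fin MM) (Fin MM) ℝ} {f : Fin MM → Bool}
    (S : ThetaReal NN MM T P Qm f)
    (A : Fin NN → Matrix (Fin n) (Fin n) ℝ) (B : Fin NN → Matrix (Fin n) (Fin m) ℝ)
    (C : Fin NN → Matrix (Fin ℓ) (Fin n) ℝ) (D : Fin NN → Matrix (Fin ℓ) (Fin m) ℝ)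
    (E : Fin NN → Matrix (Fin n) (Fin q) ℝ)
    (K : Fin NN → Fin T → Matrix (Fin m) (Fin n) ℝ) (i : Fin q) : ENNReal :=
  ∑' k : ℕ, ∫⁻ ω, sqE ((CKmat C D K (S.θ k ω)).mulVec
      (traj (AKmat A B K) (fun χ => E χ.1) S.θ (impulse q i) 0 k ω)) ∂S.μ

-- `‖Σ̄_K‖₂² < γ` (the `H₂` norm of `Σ̄_K`, defined with `θ` in place of `r̄`).
open Classical in
def H2SqLtBar {NN MM T n m q ℓ : ℕ} [NeZero T]
    (P : Matrix (Fin NN) (Fin NN) ℝ) (Qm : Matrix (Fin MM) (Fin MM) ℝ) (f : Fin MM → Bool)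
    (A : Fin NN → Matrix (Fin n) (Fin n) ℝ) (B : Fin NN → Matrix (Fin n) (Fin m) ℝ)
    (C : Fin NN → Matrix (Fin ℓ) (Fin n) ℝ) (D : Fin NN → Matrix (Fin ℓ) (Fin m) ℝ)
    (E : Fin NN → Matrix (Fin n) (Fin q) ℝ)
    (K : Fin NN → Fin T → Matrix (Fin m) (Fin n) ℝ)
    (μbar : XT NN MM T → ℝ) (γ : ℝ) : Prop :=
  ∀ (S : Fin q → XT NN MM T → ThetaReal NN MM T P Qm f),
    (∀ i χ, inX f χ → (∀ᵐ ω ∂(S i χ).μ, (S i χ).θ 0 ω = χ)) →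
    (∑ i : Fin q, ∑ χ : XT NN MM T,
        if inX f χ
        then ENNReal.ofReal (μbar χ) * H2TermBar (S i χ) A B C D E K i
        else 0)
      < ENNReal.ofReal γ

/-- The σ-algebra `Θ_k` generated by `r(0), s(0), …, r(k), s(k)`, for a realization. -/
def sigFiltSigma {NN MM : ℕ} {P : Matrix (Fin NN) (Fin NN) ℝ}
    {Q : Matrix (Fin MM) (Fin MM) ℝ} (S : MJLSReal NN MM P Q) (k : ℕ) :
    MeasurableSpace S.Ω :=
  ⨆ j ∈ Finset.range (k + 1),
    (MeasurableSpace.comap (S.r j) inferInstance ⊔ MeasurableSpace.comap (S.s j) inferInstance)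

/-- The σ-algebra generated by `θ(0), …, θ(k)`, for a realization of `θ`. -/
def sigFiltBar {NN MM T : ℕ} [NeZero T] {P : Matrix (Fin NN) (Fin NN) ℝ}
    {Q : Matrix (Fin MM) (Fin MM) ℝ} {f : Fin MM → Bool} (S : ThetaReal NN MM T P Q f)
    (k : ℕ) : MeasurableSpace S.Ω :=
  ⨆ j ∈ Finset.range (k + 1), MeasurableSpace.comap (S.θ j) inferInstance

/-- `Σ_K` satisfies `‖Σ_K‖∞² < γ`: there is `0 ≤ c < γ` such that `‖z‖₂² ≤ c ‖w‖₂²`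
for every realization, every deterministic initialization `r̄(0) = r̄₀ ∈ 𝔛`, and
every nonzero `w ∈ ℓ²(ℝ^q)` adapted to `(Θ_k)_k` (with `x₀ = 0`). -/
def HinfSqLtSigma {NN MM T n m q ℓ : ℕ} [NeZero T]
    (P : Matrix (Fin NN) (Fin NN) ℝ) (Qm : Matrix (Fin MM) (Fin MM) ℝ) (f : Fin MM → Bool)
    (A : Fin NN → Matrix (Fin n) (Fin n) ℝ) (B : Fin NN → Matrix (Fin n) (Fin m) ℝ)
    (C : Fin NN → Matrix (Fin ℓ) (Fin n) ℝ) (D : Fin NN → Matrix (Fin ℓ) (Fin m) ℝ)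
    (E : Fin NN → Matrix (Fin n) (Fin q) ℝ)
    (K : Fin NN → Fin T → Matrix (Fin m) (Fin n) ℝ) (γ : ℝ) : Prop :=
  ∃ c : ℝ, 0 ≤ c ∧ c < γ ∧
    ∀ (S : MJLSReal NN MM P Qm) (τ₀ : ℤ), τ₀ ≤ 0 → ∀ (σ₀ : Fin NN) (χ : XT NN MM T),
      inX f χ → (∀ᵐ ω ∂S.μ, rbarProc S.r S.s f τ₀ σ₀ 0 ω = χ) →
      ∀ (w : ℕ → S.Ω → Fin q → ℝ),
        (∀ k, Measurable[sigFiltSigma S k] (w k)) →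
        0 < (∑' k : ℕ, ∫⁻ ω, sqE (w k ω) ∂S.μ) →
        (∑' k : ℕ, ∫⁻ ω, sqE (w k ω) ∂S.μ) ≠ ⊤ →
        (∑' k : ℕ, ∫⁻ ω, sqE ((CKmat C D K (rbarProc S.r S.s f τ₀ σ₀ k ω)).mulVec
            (traj (AKmat A B K) (fun χ' => E χ'.1) (rbarProc S.r S.s f τ₀ σ₀) w 0 k ω)) ∂S.μ)
          ≤ ENNReal.ofReal c * (∑' k : ℕ, ∫⁻ ω, sqE (w k ω) ∂S.μ)

/-- `Σ̄_K` satisfies `‖Σ̄_K‖∞² < γ` (disturbances adapted to the filtration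
generated by `θ`). -/
def HinfSqLtBar {NN MM T n m q ℓ : ℕ} [NeZero T]
    (P : Matrix (Fin NN) (Fin NN) ℝ) (Qm : Matrix (Fin MM) (Fin MM) ℝ) (f : Fin MM → Bool)
    (A : Fin NN → Matrix (Fin n) (Fin n) ℝ) (B : Fin NN → Matrix (Fin n) (Fin m) ℝ)
    (C : Fin NN → Matrix (Fin ℓ) (Fin n) ℝ) (D : Fin NN → Matrix (Fin ℓ) (Fin m) ℝ)
    (E : Fin NN → Matrix (Fin n) (Fin q) ℝ)
    (K : Fin NN → Fin T → Matrix (Fin m) (Fin n) ℝ) (γ : ℝ) : Prop :=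
  ∃ c : ℝ, 0 ≤ c ∧ c < γ ∧
    ∀ (S : ThetaReal NN MM T P Qm f) (χ : XT NN MM T),
      inX f χ → (∀ᵐ ω ∂S.μ, S.θ 0 ω = χ) →
      ∀ (w : ℕ → S.Ω → Fin q → ℝ),
        (∀ k, Measurable[sigFiltBar S k] (w k)) →
        0 < (∑' k : ℕ, ∫⁻ ω, sqE (w k ω) ∂S.μ) →
        (∑' k : ℕ, ∫⁻ ω, sqE (w k ω) ∂S.μ) ≠ ⊤ →
        (∑' k : ℕ, ∫⁻ ω, sqE ((CKmat C D K (S.θ k ω)).mulVec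
            (traj (AKmat A B K) (fun χ' => E χ'.1) S.θ w 0 k ω)) ∂S.μ)
          ≤ ENNReal.ofReal c * (∑' k : ℕ, ∫⁻ ω, sqE (w k ω) ∂S.μ)

/-- The symmetric 4×4 block matrix appearing in the `H∞` LMI, with diagonal blocks
`D1, γ I_q, D3, I_ℓ`, sub-diagonal blocks `(3,1) = B31`, `(3,2) = B32`, `(4,1) = B41`,
the corresponding transposed blocks above the diagonal, and zeros elsewhere. -/
def hinfBlock {n q ℓ : ℕ} (γ : ℝ) (D1 D3 : Matrix (Fin n) (Fin n) ℝ)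
    (B31 : Matrix (Fin n) (Fin n) ℝ) (B32 : Matrix (Fin n) (Fin q) ℝ)
    (B41 : Matrix (Fin ℓ) (Fin n) ℝ) :
    Matrix ((Fin n ⊕ Fin q) ⊕ (Fin n ⊕ Fin ℓ)) ((Fin n ⊕ Fin q) ⊕ (Fin n ⊕ Fin ℓ)) ℝ :=
  Matrix.fromBlocks
    (Matrix.fromBlocks D1 0 0 (γ • (1 : Matrix (Fin q) (Fin q) ℝ)))
    (Matrix.fromBlocks B31ᵀ B41ᵀ B32ᵀ 0)
    (Matrix.fromBlocks B31 B32 B41 0)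
    (Matrix.fromBlocks D3 0 0 (1 : Matrix (Fin ℓ) (Fin ℓ) ℝ))

/-!
With `F = K G` the off-diagonal blocks of the two LMIs are `A_K G` and `C_K G`. Congruence by
`[1, -A_K]`, respectively `[1, -C_K]`, eliminates `G` and leaves the strict inequalities
`R - μ̄ E Eᵀ - A_K D̄(R) A_Kᵀ > 0` and `W - C_K D̄(R) C_Kᵀ > 0`. By strictness and finiteness of the
state space both survive replacing `D̄(R)` by `Q = D̄(R) + ε • 1` for some `ε > 0`. Applying the
monotone operator `D̄` to the first gives `D̄(A_K Q A_Kᵀ + μ̄ E Eᵀ) ≤ D̄(R) = Q - ε • 1`, and the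
trace of the second bounds the cost. Finally `G + Gᵀ > D̄(R) ≥ 0`, so `G` has trivial kernel.
-/

section PositiveDefinite

variable {m n : Type*}

lemma posDef_of_fromBlocks₁₁ {R : Type*} [Ring R] [PartialOrder R] [StarRing R]
    {X : Matrix m m R} {Y : Matrix m n R} {Z : Matrix n m R} {V : Matrix n n R}
    (h : (fromBlocks X Y Z V).PosDef) : X.PosDef :=
  h.submatrix Sum.inl_injective

lemma posDef_of_fromBlocks₂₂ {R : Type*} [Ring R] [PartialOrder R] [StarRing R]
    {X : Matrix m m R} {Y : Matrix m n R} {Z : Matrix n m R} {V : Matrix n n R}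
    (h : (fromBlocks X Y Z V).PosDef) : V.PosDef :=
  h.submatrix Sum.inr_injective

variable [Fintype n]

lemma posDef_sub_mul_mul_conjTranspose_of_fromBlocks [Finite m]
    {R : Type*} [Ring R] [PartialOrder R] [StarRing R]
    {X : Matrix m m R} {A : Matrix m n R} {G S : Matrix n n R}
    (h : (fromBlocks X (A * G) (A * G)ᴴ (G + Gᴴ - S)).PosDef) :
    (X - A * S * Aᴴ).PosDef := by
  classical
  have := Fintype.ofFinite m
  have h_inj : Function.Injective (fromCols (1 : Matrix m m R) (-A)).vecMul := fun v w hvw => by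
    simpa [vecMul_fromCols] using congrArg (· ∘ Sum.inl) hvw
  convert h.mul_mul_conjTranspose_same h_inj using 1
  simp only [conjTranspose_fromCols_eq_fromRows_conjTranspose, fromCols_mul_fromBlocks,
    fromCols_mul_fromRows, conjTranspose_one, conjTranspose_neg, conjTranspose_mul,
    Matrix.one_mul, Matrix.mul_one, Matrix.add_mul, Matrix.mul_add, Matrix.sub_mul,
    Matrix.mul_sub, Matrix.neg_mul, Matrix.mul_neg, Matrix.mul_assoc]
  abel

lemma isUnit_of_posDef_add_conjTranspose {K : Type*} [Field K] [PartialOrder K] [StarRing K]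
    [DecidableEq n] {G : Matrix n n K} (h : (G + Gᴴ).PosDef) : IsUnit G := by
  rw [← mulVec_injective_iff_isUnit, ← coe_mulVecLin, injective_iff_map_eq_zero]
  intro x hx
  rw [mulVecLin_apply] at hx
  by_contra hx₀
  have h_zero : star x ⬝ᵥ ((G + Gᴴ) *ᵥ x) = 0 := by
    rw [add_mulVec, dotProduct_add, hx, dotProduct_mulVec, ← star_mulVec, hx]
    simp
  exact (h.dotProduct_mulVec_pos hx₀).ne' h_zero

end PositiveDefinite

section Strictness

open scoped ComplexOrder MatrixOrder

variable {𝕜 n : Type*} [RCLike 𝕜] [Finite n]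

lemma exists_pos_posSemidef_sub_smul_one [DecidableEq n] {M : Matrix n n 𝕜} (hM : M.PosDef) :
    ∃ c : ℝ, 0 < c ∧ (M - c • (1 : Matrix n n 𝕜)).PosSemidef := by
  have := Fintype.ofFinite n
  cases isEmpty_or_nonempty n with
  | inl _ => exact ⟨1, one_pos, Subsingleton.elim 0 (M - _) ▸ PosSemidef.zero⟩
  | inr _ =>
    have h_spec : ∀ x ∈ spectrum ℝ M, 0 < x :=
      (StarOrderedRing.isStrictlyPositive_iff_spectrum_pos M hM.isHermitian).1
        hM.isStrictlyPositive
    simpa only [Algebra.algebraMap_eq_smul_one, Matrix.le_iff] using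
      (CFC.exists_pos_algebraMap_le_iff hM.isHermitian).2 h_spec

lemma exists_posSemidef_smul_one_sub [DecidableEq n] {N : Matrix n n 𝕜} (hN : N.IsHermitian) :
    ∃ C : ℝ, (C • (1 : Matrix n n 𝕜) - N).PosSemidef := by
  have := Fintype.ofFinite n
  obtain ⟨C, hC⟩ := N.finite_real_spectrum.bddAbove
  have h_le : N ≤ algebraMap ℝ _ C := le_algebraMap_of_spectrum_le (fun x hx => hC hx) hN
  exact ⟨C, by simpa only [Algebra.algebraMap_eq_smul_one, Matrix.le_iff] using h_le⟩

open Filter Topology in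
lemma eventually_posDef_sub_smul {M N : Matrix n n 𝕜} (hM : M.PosDef) (hN : N.IsHermitian) :
    ∀ᶠ ε : ℝ in 𝓝[>] 0, (M - ε • N).PosDef := by
  classical
  obtain ⟨c, hc, hcM⟩ := exists_pos_posSemidef_sub_smul_one hM
  obtain ⟨C, hCN⟩ := exists_posSemidef_smul_one_sub hN
  have h_small : ∀ᶠ ε : ℝ in 𝓝[>] 0, ε * C < c := by
    refine Tendsto.eventually_lt_const hc (tendsto_nhdsWithin_of_tendsto_nhds ?_)
    exact Continuous.tendsto' (by fun_prop) _ _ (zero_mul C)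
  filter_upwards [h_small, self_mem_nhdsWithin] with ε hεC hε
  have h_decomp : M - ε • N = (c - ε * C) • (1 : Matrix n n 𝕜)
      + ((M - c • (1 : Matrix n n 𝕜)) + ε • (C • (1 : Matrix n n 𝕜) - N)) := by
    module
  rw [h_decomp]
  exact (PosDef.one.smul (sub_pos.2 hεC)).add_posSemidef
    (hcM.add (hCN.smul (le_of_lt hε)))

end Strictness

section Coupled

open scoped ComplexOrder

variable {ι m n 𝕜 : Type*} [Finite ι] [Finite m] [Fintype n] [RCLike 𝕜]

open Filter Topology in
lemma exists_posDef_sub_monotone_of_posDef {s : Set ι}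
    {Φ : (ι → Matrix n n 𝕜) → ι → Matrix n n 𝕜}
    (hΦ : ∀ X Y, (∀ i ∈ s, (Y i - X i).PosSemidef) → ∀ i ∈ s, (Φ Y i - Φ X i).PosSemidef)
    {A R V : ι → Matrix n n 𝕜} {C : ι → Matrix m n 𝕜} {W : ι → Matrix m m 𝕜}
    (hΦR : ∀ i ∈ s, (Φ R i).PosSemidef)
    (hA : ∀ i ∈ s, (R i - V i - A i * Φ R i * (A i)ᴴ).PosDef)
    (hC : ∀ i ∈ s, (W i - C i * Φ R i * (C i)ᴴ).PosDef) :
    ∃ Q : ι → Matrix n n 𝕜,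
      (∀ i ∈ s, (Q i).PosDef) ∧
      (∀ i ∈ s, (W i - C i * Q i * (C i)ᴴ).PosDef) ∧
      ∀ i ∈ s, (Q i - Φ (fun j => A j * Q j * (A j)ᴴ + V j) i).PosDef := by
  classical
  have := Fintype.ofFinite m
  have h_perturb : ∀ᶠ ε : ℝ in 𝓝[>] 0, ∀ i, i ∈ s →
      (R i - V i - A i * Φ R i * (A i)ᴴ - ε • (A i * (A i)ᴴ)).PosDef ∧
      (W i - C i * Φ R i * (C i)ᴴ - ε • (C i * (C i)ᴴ)).PosDef := by
    simp only [eventually_all]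
    exact fun i hi =>
      (eventually_posDef_sub_smul (hA i hi) (isHermitian_mul_conjTranspose_self _)).and
        (eventually_posDef_sub_smul (hC i hi) (isHermitian_mul_conjTranspose_self _))
  obtain ⟨ε, hε, hε_pos⟩ := (h_perturb.and self_mem_nhdsWithin).exists
  have h_one : (ε • (1 : Matrix n n 𝕜)).PosDef := PosDef.one.smul hε_pos
  refine ⟨fun i => Φ R i + ε • 1, fun i hi => h_one.posSemidef_add (hΦR i hi),
    fun i hi => ?_, fun i hi => ?_⟩
  · convert (hε i hi).2 using 1
    simp [Matrix.mul_add, Matrix.add_mul, sub_sub]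
  · have h_le : ∀ j ∈ s, (R j - (A j * (Φ R j + ε • 1) * (A j)ᴴ + V j)).PosSemidef := by
      intro j hj
      convert (hε j hj).1.posSemidef using 1
      simp only [Matrix.mul_add, Matrix.add_mul, Matrix.mul_smul, Matrix.smul_mul, Matrix.mul_one]
      abel
    rw [add_sub_right_comm]
    exact h_one.posSemidef_add (hΦ _ _ h_le i hi)

end Coupled

section ExtendedChain

variable {NN MM T n m ℓ : ℕ}

section Coupling

variable [NeZero T] {P : Matrix (Fin NN) (Fin NN) ℝ} {Q : Matrix (Fin MM) (Fin MM) ℝ}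

lemma pbar_nonneg (hP : ∀ i j, 0 ≤ P i j) (hQ : ∀ i j, 0 ≤ Q i j) (f : Fin MM → Bool)
    (χ χ' : XT NN MM T) : 0 ≤ pbar P Q f χ χ' := by
  refine mul_nonneg (mul_nonneg ?_ (hP _ _)) (hQ _ _)
  split_ifs <;> norm_num

lemma Dop_posSemidef (hP : ∀ i j, 0 ≤ P i j) (hQ : ∀ i j, 0 ≤ Q i j) {f : Fin MM → Bool}
    {R : XT NN MM T → Matrix (Fin n) (Fin n) ℝ} (hR : ∀ χ, inX f χ → (R χ).PosSemidef)
    (χ : XT NN MM T) : (Dop P Q f R χ).PosSemidef := by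
  refine posSemidef_sum _ fun χ' _ => ?_
  split_ifs with h
  · exact (hR χ' h).smul (pbar_nonneg hP hQ f χ' χ)
  · exact PosSemidef.zero

lemma Dop_sub (f : Fin MM → Bool) (R R' : XT NN MM T → Matrix (Fin n) (Fin n) ℝ)
    (χ : XT NN MM T) : Dop P Q f (fun χ' => R χ' - R' χ') χ = Dop P Q f R χ - Dop P Q f R' χ := by
  simp only [Dop, ← Finset.sum_sub_distrib]
  refine Finset.sum_congr rfl fun χ' _ => ?_
  split_ifs <;> simp [smul_sub]

end Coupling

variable {K : Fin NN → Fin T → Matrix (Fin m) (Fin n) ℝ} {F : Matrix (Fin m) (Fin n) ℝ}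
  {G : Matrix (Fin n) (Fin n) ℝ} {χ : XT NN MM T}

lemma AKmat_mul (A : Fin NN → Matrix (Fin n) (Fin n) ℝ) (B : Fin NN → Matrix (Fin n) (Fin m) ℝ)
    (hKG : K χ.2.2.1 χ.2.2.2 * G = F) : AKmat A B K χ * G = A χ.1 * G + B χ.1 * F := by
  rw [AKmat, Matrix.add_mul, Matrix.mul_assoc, hKG]

lemma CKmat_mul (C : Fin NN → Matrix (Fin ℓ) (Fin n) ℝ) (D : Fin NN → Matrix (Fin ℓ) (Fin m) ℝ)
    (hKG : K χ.2.2.1 χ.2.2.2 * G = F) : CKmat C D K χ * G = C χ.1 * G + D χ.1 * F := by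
  rw [CKmat, Matrix.add_mul, Matrix.mul_assoc, hKG]

end ExtendedChain

open Classical in
theorem h2_lmi_matrix_general
    {NN MM T n m q ℓ : ℕ} [NeZero T]
    (P : Matrix (Fin NN) (Fin NN) ℝ) (Qm : Matrix (Fin MM) (Fin MM) ℝ)
    (hP0 : ∀ i j, 0 ≤ P i j) (hQ0 : ∀ i j, 0 ≤ Qm i j)
    (f : Fin MM → Bool)
    (A : Fin NN → Matrix (Fin n) (Fin n) ℝ) (B : Fin NN → Matrix (Fin n) (Fin m) ℝ)
    (C : Fin NN → Matrix (Fin ℓ) (Fin n) ℝ) (D : Fin NN → Matrix (Fin ℓ) (Fin m) ℝ)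
    (E : Fin NN → Matrix (Fin n) (Fin q) ℝ)
    (γ₀ : ℝ) (μbar : XT NN MM T → ℝ) (hμ0 : ∀ χ, 0 ≤ μbar χ)
    (W : XT NN MM T → Matrix (Fin ℓ) (Fin ℓ) ℝ)
    (R : XT NN MM T → Matrix (Fin n) (Fin n) ℝ)
    (G : Fin NN → Fin T → Matrix (Fin n) (Fin n) ℝ)
    (F : Fin NN → Fin T → Matrix (Fin m) (Fin n) ℝ)
    (hLMI1 : ∀ χ : XT NN MM T, inX f χ →
      (Matrix.fromBlocks (R χ - μbar χ • (E χ.1 * (E χ.1)ᵀ))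
        (A χ.1 * G χ.2.2.1 χ.2.2.2 + B χ.1 * F χ.2.2.1 χ.2.2.2)
        (A χ.1 * G χ.2.2.1 χ.2.2.2 + B χ.1 * F χ.2.2.1 χ.2.2.2)ᵀ
        (G χ.2.2.1 χ.2.2.2 + (G χ.2.2.1 χ.2.2.2)ᵀ - Dop P Qm f R χ)).PosDef)
    (hLMI2 : ∀ χ : XT NN MM T, inX f χ →
      (Matrix.fromBlocks (W χ)
        (C χ.1 * G χ.2.2.1 χ.2.2.2 + D χ.1 * F χ.2.2.1 χ.2.2.2)
        (C χ.1 * G χ.2.2.1 χ.2.2.2 + D χ.1 * F χ.2.2.1 χ.2.2.2)ᵀ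
        (G χ.2.2.1 χ.2.2.2 + (G χ.2.2.1 χ.2.2.2)ᵀ - Dop P Qm f R χ)).PosDef)
    (htr : (∑ χ : XT NN MM T, if inX f χ then (W χ).trace else 0) < γ₀) :
    (∀ g d, Admissible f g d → IsUnit (G g d)) ∧
    ∀ K : Fin NN → Fin T → Matrix (Fin m) (Fin n) ℝ,
      (∀ g d, Admissible f g d → K g d = F g d * (G g d)⁻¹) →
      ∃ Qmat : XT NN MM T → Matrix (Fin n) (Fin n) ℝ,
        (∀ χ, inX f χ → (Qmat χ).PosDef) ∧
        (∑ χ : XT NN MM T, if inX f χ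
            then (CKmat C D K χ * Qmat χ * (CKmat C D K χ)ᵀ).trace else 0) < γ₀ ∧
        ∀ χ, inX f χ →
          (Qmat χ - Dop P Qm f
            (fun χ' => AKmat A B K χ' * Qmat χ' * (AKmat A B K χ')ᵀ
              + μbar χ' • (E χ'.1 * (E χ'.1)ᵀ)) χ).PosDef := by
  simp only [← conjTranspose_eq_transpose_of_trivial] at hLMI1 hLMI2 ⊢
  have hR : ∀ χ, inX f χ → (R χ).PosSemidef := fun χ h => by
    simpa using (posDef_of_fromBlocks₁₁ (hLMI1 χ h)).posSemidef.add
      ((posSemidef_self_mul_conjTranspose (E χ.1)).smul (hμ0 χ))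
  have hDR : ∀ χ, (Dop P Qm f R χ).PosSemidef := Dop_posSemidef hP0 hQ0 hR
  have hG : ∀ g d, Admissible f g d → IsUnit (G g d) := fun g d ⟨α, β, h⟩ =>
    isUnit_of_posDef_add_conjTranspose <| by
      simpa using (posDef_of_fromBlocks₂₂ (hLMI1 (α, β, g, d) h)).add_posSemidef (hDR (α, β, g, d))
  refine ⟨hG, fun K hK => ?_⟩
  have hKG : ∀ χ : XT NN MM T, inX f χ →
      K χ.2.2.1 χ.2.2.2 * G χ.2.2.1 χ.2.2.2 = F χ.2.2.1 χ.2.2.2 := fun χ h => by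
    have h_adm : Admissible f χ.2.2.1 χ.2.2.2 := ⟨χ.1, χ.2.1, h⟩
    rw [hK _ _ h_adm, nonsing_inv_mul_cancel_right _ _ ((isUnit_iff_isUnit_det _).1 (hG _ _ h_adm))]
  obtain ⟨Q, hQ, hWQ, hQD⟩ := exists_posDef_sub_monotone_of_posDef (s := {χ | inX f χ})
    (fun X Y hXY χ _ => Dop_sub f Y X χ ▸ Dop_posSemidef hP0 hQ0 hXY χ) (fun χ _ => hDR χ)
    (fun χ h => posDef_sub_mul_mul_conjTranspose_of_fromBlocks
      (AKmat_mul A B (hKG χ h) ▸ hLMI1 χ h))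
    (fun χ h => posDef_sub_mul_mul_conjTranspose_of_fromBlocks
      (CKmat_mul C D (hKG χ h) ▸ hLMI2 χ h))
  refine ⟨Q, hQ, lt_of_le_of_lt (Finset.sum_le_sum fun χ _ => ?_) htr, hQD⟩
  split_ifs with h
  · simpa only [trace_sub, sub_nonneg] using (hWQ χ h).posSemidef.trace_nonneg
  · rfl

open Classical in
/-- the `H₂` LMIs imply invertibility of the `G_{γ,δ}` and, for
`K_{γ,δ} = F_{γ,δ} G_{γ,δ}⁻¹`, the existence of positive definite `Q_χ` with
`∑_χ tr(C_{K,χ} Q_χ C_{K,χ}ᵀ) < γ₀` and `Q_χ - D̄_χ(A_K Q A_Kᵀ + μ̄ E_K E_Kᵀ) > 0`. -/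
theorem h2_lmi_matrix
    {NN MM T n m q ℓ : ℕ} [NeZero NN] [NeZero MM] [NeZero T]
    [NeZero n] [NeZero m] [NeZero q] [NeZero ℓ]
    (P : Matrix (Fin NN) (Fin NN) ℝ) (Qm : Matrix (Fin MM) (Fin MM) ℝ)
    (hP0 : ∀ i j, 0 ≤ P i j) (hP1 : ∀ i, ∑ j, P i j = 1)
    (hQ0 : ∀ i j, 0 ≤ Qm i j) (hQ1 : ∀ i, ∑ j, Qm i j = 1)
    (f : Fin MM → Bool)
    (A : Fin NN → Matrix (Fin n) (Fin n) ℝ) (B : Fin NN → Matrix (Fin n) (Fin m) ℝ)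
    (C : Fin NN → Matrix (Fin ℓ) (Fin n) ℝ) (D : Fin NN → Matrix (Fin ℓ) (Fin m) ℝ)
    (E : Fin NN → Matrix (Fin n) (Fin q) ℝ)
    (γ₀ : ℝ) (hγ₀ : 0 < γ₀)
    (μbar : XT NN MM T → ℝ) (hμ0 : ∀ χ, 0 ≤ μbar χ)
    (hμsupp : ∀ χ, ¬ inX f χ → μbar χ = 0)
    (hμ1 : ∑ χ : XT NN MM T, μbar χ = 1)
    (W : XT NN MM T → Matrix (Fin ℓ) (Fin ℓ) ℝ)
    (hWsym : ∀ χ, inX f χ → (W χ).IsHermitian)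
    (R : XT NN MM T → Matrix (Fin n) (Fin n) ℝ)
    (hRsym : ∀ χ, inX f χ → (R χ).IsHermitian)
    (G : Fin NN → Fin T → Matrix (Fin n) (Fin n) ℝ)
    (F : Fin NN → Fin T → Matrix (Fin m) (Fin n) ℝ)
    (hLMI1 : ∀ χ : XT NN MM T, inX f χ →
      (Matrix.fromBlocks (R χ - μbar χ • (E χ.1 * (E χ.1)ᵀ))
        (A χ.1 * G χ.2.2.1 χ.2.2.2 + B χ.1 * F χ.2.2.1 χ.2.2.2)
        (A χ.1 * G χ.2.2.1 χ.2.2.2 + B χ.1 * F χ.2.2.1 χ.2.2.2)ᵀ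
        (G χ.2.2.1 χ.2.2.2 + (G χ.2.2.1 χ.2.2.2)ᵀ - Dop P Qm f R χ)).PosDef)
    (hLMI2 : ∀ χ : XT NN MM T, inX f χ →
      (Matrix.fromBlocks (W χ)
        (C χ.1 * G χ.2.2.1 χ.2.2.2 + D χ.1 * F χ.2.2.1 χ.2.2.2)
        (C χ.1 * G χ.2.2.1 χ.2.2.2 + D χ.1 * F χ.2.2.1 χ.2.2.2)ᵀ
        (G χ.2.2.1 χ.2.2.2 + (G χ.2.2.1 χ.2.2.2)ᵀ - Dop P Qm f R χ)).PosDef)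
    (htr : (∑ χ : XT NN MM T, if inX f χ then (W χ).trace else 0) < γ₀) :
    (∀ g d, Admissible f g d → IsUnit (G g d)) ∧
    ∀ K : Fin NN → Fin T → Matrix (Fin m) (Fin n) ℝ,
      (∀ g d, Admissible f g d → K g d = F g d * (G g d)⁻¹) →
      ∃ Qmat : XT NN MM T → Matrix (Fin n) (Fin n) ℝ,
        (∀ χ, inX f χ → (Qmat χ).PosDef) ∧
        (∑ χ : XT NN MM T, if inX f χ
            then (CKmat C D K χ * Qmat χ * (CKmat C D K χ)ᵀ).trace else 0) < γ₀ ∧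
        ∀ χ, inX f χ →
          (Qmat χ - Dop P Qm f
            (fun χ' => AKmat A B K χ' * Qmat χ' * (AKmat A B K χ')ᵀ
              + μbar χ' • (E χ'.1 * (E χ'.1)ᵀ)) χ).PosDef := by
  exact h2_lmi_matrix_general P Qm hP0 hQ0 f A B C D E γ₀ μbar hμ0 W R G F hLMI1 hLMI2 htr

end
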